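/- arXiv:2303.14507 — 3 statements merged into one kernel-verified Lean document; each statement's English description precedes it below -/
import Mathlib

section
/- Fix s ≥ 1. For every σ > 0 and every s' > s one has G^s ⪵ N^{s,σ} ⪵ G^{s'}; that is: G^s ⪯ N^{s,σ} but N^{s,σ} is not ⪯ G^s, and N^{s,σ} ⪯ G^{s'} but G^{s'} is not ⪯ N^{s,σ}. -/
open MeasureTheory Filter Finset

noncomputable section

/-- `M` is a weight sequence: positivity, `M₀ = 1`, `M₁ ≥ 1`, log-convexity, and
`M_k^{1/k} → ∞`. -/
def IsWeightSeq (M : ℕ → ℝ) : Prop :=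
  (∀ k, 0 < M k) ∧ M 0 = 1 ∧ 1 ≤ M 1 ∧
    (∀ k : ℕ, (M (k + 1)) ^ 2 ≤ M k * M (k + 2)) ∧
    Tendsto (fun k : ℕ => (M k) ^ ((k : ℝ)⁻¹)) atTop atTop

/-- `Λ_k = M_k^{1/k}`. -/
def Lam (M : ℕ → ℝ) (k : ℕ) : ℝ := (M k) ^ ((k : ℝ)⁻¹)

/-- Condition (i): there are `C, h > 0` with `k! ≤ C h^k M_k` for all `k`. -/
def FactBound (M : ℕ → ℝ) : Prop :=
  ∃ C > 0, ∃ h > 0, ∀ k : ℕ, (k.factorial : ℝ) ≤ C * h ^ k * M k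

/-- Condition (mg): there is `A > 0` with `M_{j+k} ≤ A^{j+k} M_j M_k` for all `j, k`. -/
def MG (M : ℕ → ℝ) : Prop := ∃ A > 0, ∀ j k : ℕ, M (j + k) ≤ A ^ (j + k) * M j * M k

/-- Admissible weight sequence. -/
def IsAdmissible (M : ℕ → ℝ) : Prop := IsWeightSeq M ∧ FactBound M ∧ MG M

/-- The relation `M ⪯ N`. -/
def Preceq (M N : ℕ → ℝ) : Prop := ∃ C > 0, ∃ h > 0, ∀ k : ℕ, M k ≤ C * h ^ k * N k

/-- The Gevrey sequence `G^s_k = (k!)^s`. -/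
def Gev (s : ℝ) (k : ℕ) : ℝ := (k.factorial : ℝ) ^ s

/-- The sequence `N^{s,σ}` with `N_k = (k!)^s (log(k+e))^{σ k}`. -/
def Nseq (s σ : ℝ) (k : ℕ) : ℝ :=
  (k.factorial : ℝ) ^ s * (Real.log ((k : ℝ) + Real.exp 1)) ^ (σ * (k : ℝ))

/-! Since `M_k = Λ_k(M)^k`, the relation `M ⪯ N` says `Λ(M) = O(Λ(N))`, and it is strict when
`Λ(M) = o(Λ(N))`. Now `Λ_k(N^{s,σ}) = Λ_k(G^s) (log (k + e))^σ` for `k ≥ 1`, while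
`Λ_k(G^{s'}) = Λ_k(G^s) Λ_k(G^{s'-s})` with `Λ_k(G^d) ≥ (k / e)^d` for `d ≥ 0`, so both strict
relations come down to `1 ≪ (log k)^σ ≪ k^{s'-s}`. -/

open Asymptotics

section Root

variable {M N : ℕ → ℝ} {k : ℕ}

theorem lam_nonneg (hM : 0 ≤ M k) : 0 ≤ Lam M k :=
  Real.rpow_nonneg hM _

theorem lam_pos (hM : 0 < M k) : 0 < Lam M k :=
  Real.rpow_pos_of_pos hM _

theorem lam_pow (hM : 0 ≤ M k) (hk : k ≠ 0) : Lam M k ^ k = M k :=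
  Real.rpow_inv_natCast_pow hM hk

theorem lam_mul (hM : 0 ≤ M k) (hN : 0 ≤ N k) : Lam (fun j => M j * N j) k = Lam M k * Lam N k :=
  Real.mul_rpow hM hN

theorem le_lam_iff {x : ℝ} (hx : 0 ≤ x) (hM : 0 ≤ M k) (hk : k ≠ 0) :
    x ≤ Lam M k ↔ x ^ k ≤ M k := by
  rw [← lam_pow hM hk, pow_le_pow_iff_left₀ hx (lam_nonneg hM) hk]

end Root

section Comparison

variable {M N : ℕ → ℝ}

theorem Preceq.lam_isBigO (h : Preceq M N) (hM : ∀ k, 0 ≤ M k) (hN : ∀ k, 0 ≤ N k) :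
    Lam M =O[atTop] Lam N := by
  obtain ⟨C, -, h, hh, hle⟩ := h
  refine .of_bound (max C 1 * h) ?_
  filter_upwards [eventually_ne_atTop 0] with k hk
  rw [Real.norm_of_nonneg (lam_nonneg (hM k)), Real.norm_of_nonneg (lam_nonneg (hN k))]
  have hC : C ≤ max C 1 ^ k := (le_max_left C 1).trans (le_self_pow₀ (le_max_right C 1) hk)
  have hroot : 0 ≤ Lam N k := lam_nonneg (hN k)
  refine le_of_pow_le_pow_left₀ hk (by positivity) ?_
  calc Lam M k ^ k = M k := lam_pow (hM k) hk
    _ ≤ C * h ^ k * N k := hle k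
    _ ≤ max C 1 ^ k * h ^ k * N k := by gcongr; exact hN k
    _ = (max C 1 * h * Lam N k) ^ k := by rw [mul_pow, mul_pow, lam_pow (hN k) hk]

theorem preceq_of_lam_isBigO (hM : ∀ k, 0 ≤ M k) (hN : ∀ k, 0 < N k)
    (h : Lam M =O[atTop] Lam N) : Preceq M N := by
  obtain ⟨c, hc, hle⟩ := bound_of_isBigO_nat_atTop h
  have hratio : 0 ≤ M 0 / N 0 := div_nonneg (hM 0) (hN 0).le
  refine ⟨M 0 / N 0 + 1, by positivity, c, hc, fun k => ?_⟩
  rcases eq_or_ne k 0 with rfl | hk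
  · rw [pow_zero, mul_one, add_one_mul, div_mul_cancel₀ _ (hN 0).ne']
    exact le_add_of_nonneg_right (hN 0).le
  have hroot : Lam M k ≤ c * Lam N k := by
    simpa only [Real.norm_of_nonneg (lam_nonneg (hM k)), Real.norm_of_nonneg (lam_pos (hN k)).le]
      using hle (lam_pos (hN k)).ne'
  calc M k = Lam M k ^ k := (lam_pow (hM k) hk).symm
    _ ≤ (c * Lam N k) ^ k := pow_le_pow_left₀ (lam_nonneg (hM k)) hroot k
    _ = 1 * (c ^ k * N k) := by rw [mul_pow, lam_pow (hN k).le hk, one_mul]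
    _ ≤ (M 0 / N 0 + 1) * (c ^ k * N k) := by
        gcongr
        · exact mul_nonneg (by positivity) (hN k).le
        · exact le_add_of_nonneg_left hratio
    _ = (M 0 / N 0 + 1) * c ^ k * N k := (mul_assoc _ _ _).symm

theorem preceq_and_not_preceq_of_lam_isLittleO (hM : ∀ k, 0 ≤ M k) (hN : ∀ k, 0 < N k)
    (h : Lam M =o[atTop] Lam N) : Preceq M N ∧ ¬ Preceq N M := by
  refine ⟨preceq_of_lam_isBigO hM hN h.isBigO, fun hNM => ?_⟩
  have hfreq : ∃ᶠ k in atTop, Lam N k ≠ 0 := .of_forall fun k => (lam_pos (hN k)).ne'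
  exact (hNM.lam_isBigO (fun k => (hN k).le) hM).not_isLittleO hfreq h

end Comparison

theorem gev_pos (s : ℝ) (k : ℕ) : 0 < Gev s k :=
  Real.rpow_pos_of_pos (Nat.cast_pos.mpr k.factorial_pos) s

theorem gev_add (s d : ℝ) : Gev (s + d) = fun k => Gev s k * Gev d k :=
  funext fun k => Real.rpow_add (Nat.cast_pos.mpr k.factorial_pos) s d

theorem div_exp_one_pow_le_factorial (k : ℕ) : ((k : ℝ) / Real.exp 1) ^ k ≤ k.factorial := by
  have h := Real.pow_div_factorial_le_exp (k : ℝ) (Nat.cast_nonneg k) k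
  rw [div_le_comm₀ (by positivity) (Real.exp_pos _)] at h
  rwa [div_pow, Real.exp_one_pow]

theorem div_exp_one_rpow_le_lam_gev {d : ℝ} (hd : 0 ≤ d) {k : ℕ} (hk : k ≠ 0) :
    ((k : ℝ) / Real.exp 1) ^ d ≤ Lam (Gev d) k := by
  rw [le_lam_iff (by positivity) (gev_pos d k).le hk, Real.rpow_pow_comm (by positivity)]
  exact Real.rpow_le_rpow (by positivity) (div_exp_one_pow_le_factorial k) hd

theorem natCast_rpow_isBigO_lam_gev {d : ℝ} (hd : 0 ≤ d) :
    (fun k : ℕ => (k : ℝ) ^ d) =O[atTop] Lam (Gev d) := by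
  refine .of_bound (Real.exp 1 ^ d) ?_
  filter_upwards [eventually_ne_atTop 0] with k hk
  rw [Real.norm_of_nonneg (by positivity), Real.norm_of_nonneg (lam_pos (gev_pos d k)).le,
    ← div_le_iff₀' (by positivity), ← Real.div_rpow (by positivity) (by positivity)]
  exact div_exp_one_rpow_le_lam_gev hd hk

theorem tendsto_natCast_add_atTop (a : ℝ) : Tendsto (fun k : ℕ => (k : ℝ) + a) atTop atTop :=
  tendsto_atTop_add_const_right _ a tendsto_natCast_atTop_atTop

theorem one_isLittleO_log_natCast_add_rpow (a : ℝ) {σ : ℝ} (hσ : 0 < σ) :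
    (fun _ : ℕ => (1 : ℝ)) =o[atTop] fun k : ℕ => Real.log (k + a) ^ σ :=
  (isLittleO_one_left_iff ℝ).mpr <| tendsto_norm_atTop_atTop.comp <|
    (tendsto_rpow_atTop hσ).comp <| Real.tendsto_log_atTop.comp <| tendsto_natCast_add_atTop a

theorem log_natCast_add_rpow_isLittleO (a σ : ℝ) {d : ℝ} (hd : 0 < d) :
    (fun k : ℕ => Real.log (k + a) ^ σ) =o[atTop] fun k : ℕ => (k : ℝ) ^ d := by
  have hshift : (fun k : ℕ => (k : ℝ) + a) =O[atTop] fun k : ℕ => (k : ℝ) :=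
    (isBigO_refl _ _).add
      ((isLittleO_const_id_atTop a).comp_tendsto tendsto_natCast_atTop_atTop).isBigO
  have hnonneg : 0 ≤ᶠ[atTop] fun k : ℕ => (k : ℝ) := .of_forall fun k => Nat.cast_nonneg k
  exact ((isLittleO_log_rpow_rpow_atTop σ hd).comp_tendsto
    (tendsto_natCast_add_atTop a)).trans_isBigO (hshift.rpow hd.le hnonneg)

theorem log_natCast_add_exp_one_pos (k : ℕ) : 0 < Real.log ((k : ℝ) + Real.exp 1) :=
  Real.log_pos <| lt_add_of_nonneg_of_lt k.cast_nonneg (Real.one_lt_exp_iff.mpr one_pos)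

theorem nseq_pos (s σ : ℝ) (k : ℕ) : 0 < Nseq s σ k :=
  mul_pos (gev_pos s k) (Real.rpow_pos_of_pos (log_natCast_add_exp_one_pos k) _)

theorem lam_nseq (s σ : ℝ) {k : ℕ} (hk : k ≠ 0) :
    Lam (Nseq s σ) k = Lam (Gev s) k * Real.log (k + Real.exp 1) ^ σ := by
  have hlog := (log_natCast_add_exp_one_pos k).le
  have hroot : (Real.log (k + Real.exp 1) ^ (σ * k)) ^ (k : ℝ)⁻¹ =
      Real.log (k + Real.exp 1) ^ σ := by
    rw [← Real.rpow_mul hlog, mul_inv_cancel_right₀ (Nat.cast_ne_zero.mpr hk)]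
  rw [← hroot]
  exact Real.mul_rpow (gev_pos s k).le (Real.rpow_nonneg hlog _)

theorem lam_nseq_eventuallyEq (s σ : ℝ) :
    Lam (Nseq s σ) =ᶠ[atTop] fun k : ℕ => Lam (Gev s) k * Real.log (k + Real.exp 1) ^ σ :=
  (eventually_ne_atTop 0).mono fun _ hk => lam_nseq s σ hk

theorem lam_gev_isLittleO_lam_nseq (s : ℝ) {σ : ℝ} (hσ : 0 < σ) :
    Lam (Gev s) =o[atTop] Lam (Nseq s σ) := by
  refine IsLittleO.trans_eventuallyEq ?_ (lam_nseq_eventuallyEq s σ).symm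
  simpa only [mul_one] using
    (isBigO_refl (Lam (Gev s)) atTop).mul_isLittleO (one_isLittleO_log_natCast_add_rpow _ hσ)

theorem lam_nseq_isLittleO_lam_gev (σ : ℝ) {s s' : ℝ} (hs' : s < s') :
    Lam (Nseq s σ) =o[atTop] Lam (Gev s') := by
  have hd : 0 < s' - s := sub_pos.mpr hs'
  have hlam : Lam (Gev s') = fun k => Lam (Gev s) k * Lam (Gev (s' - s)) k := by
    rw [← add_sub_cancel s s', gev_add, add_sub_cancel]
    exact funext fun k => lam_mul (gev_pos s k).le (gev_pos (s' - s) k).le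
  rw [hlam]
  exact (lam_nseq_eventuallyEq s σ).trans_isLittleO <| (isBigO_refl _ _).mul_isLittleO <|
    (log_natCast_add_rpow_isLittleO _ σ hd).trans_isBigO (natCast_rpow_isBigO_lam_gev hd.le)

theorem statement7_general (s σ s' : ℝ) (hσ : 0 < σ) (hs' : s < s') :
    Preceq (Gev s) (Nseq s σ) ∧ ¬ Preceq (Nseq s σ) (Gev s) ∧
      Preceq (Nseq s σ) (Gev s') ∧ ¬ Preceq (Gev s') (Nseq s σ) :=
  have hlower := preceq_and_not_preceq_of_lam_isLittleO (fun k => (gev_pos s k).le)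
    (nseq_pos s σ) (lam_gev_isLittleO_lam_nseq s hσ)
  have hupper := preceq_and_not_preceq_of_lam_isLittleO (fun k => (nseq_pos s σ k).le)
    (gev_pos s') (lam_nseq_isLittleO_lam_gev σ hs')
  ⟨hlower.1, hlower.2, hupper⟩

/-- for fixed `s ≥ 1`, every `σ > 0` and `s' > s` one has
`G^s ⪵ N^{s,σ} ⪵ G^{s'}`. -/
theorem statement7 (s σ s' : ℝ) (hs : 1 ≤ s) (hσ : 0 < σ) (hs' : s < s') :
    Preceq (Gev s) (Nseq s σ) ∧ ¬ Preceq (Nseq s σ) (Gev s) ∧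
      Preceq (Nseq s σ) (Gev s') ∧ ¬ Preceq (Gev s') (Nseq s σ) := by
  exact statement7_general s σ s' hσ hs'


end
end

section
/- Let M be an admissible weight sequence with Λ_m = M_m^{1/m}, let σ > 1 satisfy Λ_{m+1} ≤ σ Λ_m for all m ≥ 1, fix an integer k ≥ 1, and let (k_j)_{j≥0} be a sequence of positive integers with k_0 = k and σ^{j−1} Λ_k ≤ Λ_{k_j} ≤ σ^j Λ_k for all j ≥ 1. Then there exist constants C, γ > 0 depending only on M and σ (independent of k) such that every u ∈ L²(ℝ^n) whose Fourier transform satisfies ξ^α û ∈ L²(ℝ^n) for all |α| ≤ k can be written as u = Σ_{j≥0} u_j with convergence in L²(ℝ^n), where each u_j ∈ L²(ℝ^n) satisfies ‖e^{ω_M(|ξ|)} û_j‖_{L²} < ∞, and Σ_{j≥0} Λ_{k_j}^{2k} ( ‖u_j‖²_{L²(ℝ^n)} + e^{−2ω_M(Λ_{k_j})} ‖e^{ω_M(|ξ|)} û_j‖²_{L²(ℝ^n)} ) ≤ C γ^k ( Σ_{|α|≤k} Λ_k^{k−|α|} ‖ξ^α û‖_{L²(ℝ^n)} )². -/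
open MeasureTheory Filter Finset

noncomputable section

/-- Euclidean `n`-space. -/
abbrev Esp (n : ℕ) := EuclideanSpace ℝ (Fin n)

/-- The length `|α|` of a multi-index. -/
def degree {n : ℕ} (α : Fin n → ℕ) : ℕ := ∑ i, α i

/-- The finite set of all multi-indices `α` with `|α| ≤ k`. -/
def midx (n k : ℕ) : Finset (Fin n → ℕ) :=
  (Fintype.piFinset fun _ : Fin n => Finset.range (k + 1)).filter fun α => degree α ≤ k

/-- The monomial `ξ^α`. -/
def mon {n : ℕ} (α : Fin n → ℕ) (ξ : Esp n) : ℝ := ∏ i, ξ i ^ α i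

/-- The `L²(ℝ^n)` norm of a complex-valued function. -/
def L2C {n : ℕ} (g : Esp n → ℂ) : ℝ := (∫ ξ : Esp n, ‖g ξ‖ ^ 2) ^ ((1 : ℝ) / 2)

/-- The weight function `ω_M` associated to `M`. -/
def omegaM (M : ℕ → ℝ) (t : ℝ) : ℝ := ⨆ k : ℕ, Real.log (t ^ k / M k)

/-!
Cut `g` along the shells `r (j - 1) < ‖ξ‖ ≤ r j`, where `r j = Λ_{k_j}`. On the `j`-th shell
`ω_M(‖ξ‖) ≤ ω_M(r j)`, so the normalized weighted norm of the piece `g_j` is at most its `L²` norm.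
Consecutive radii have ratio at most `q = σ²`, hence
`r j ^ (2 * k) ≤ r 0 ^ (2 * k) + (q * ‖ξ‖) ^ (2 * k)` there, and summing over the disjoint shells
leaves `r 0 ^ (2 * k) * ‖g‖²` and `q ^ (2 * k) * ‖|ξ| ^ k g‖²`. Convexity of `t ↦ t ^ k` bounds
`‖ξ‖ ^ (2 * k)` by `n ^ (k - 1) * ∑ i, ξ i ^ (2 * k)`, so both are controlled by the monomials `1`
and `ξ i ^ k`.
-/

section DisjointedPieces

open scoped Topology

variable {α E : Type*} {B : ℕ → Set α}

theorem sum_indicator_disjointed [AddCommMonoid E] (hB : Monotone B) (g : α → E) (N : ℕ) :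
    ∑ j ∈ range (N + 1), (disjointed B j).indicator g = (B N).indicator g := by
  have hunion : ⋃ j ∈ range (N + 1), disjointed B j = B N := by
    rw [biUnion_range_succ_disjointed, hB.partialSups_eq]
  rw [← hunion, indicator_biUnion _ _ ((disjoint_disjointed B).set_pairwise _)]
  exact funext fun _ => Finset.sum_apply ..

variable [MeasurableSpace α] {μ : Measure α}

theorem tendsto_setLIntegral_zero_of_antitone {f : α → ENNReal}
    (hf : ∫⁻ x, f x ∂μ ≠ ⊤) {s : ℕ → Set α} (hs : Antitone s)
    (hs_meas : ∀ N, MeasurableSet (s N)) (hs_inter : ⋂ N, s N = ∅) :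
    Tendsto (fun N => ∫⁻ x in s N, f x ∂μ) atTop (𝓝 0) := by
  have hfin : IsFiniteMeasure (μ.withDensity f) := isFiniteMeasure_withDensity hf
  have hlim := tendsto_measure_iInter_atTop (μ := μ.withDensity f)
    (fun N => (hs_meas N).nullMeasurableSet) hs ⟨0, measure_ne_top _ _⟩
  simpa only [hs_inter, measure_empty, Function.comp_def, withDensity_apply _ (hs_meas _)]
    using hlim

theorem tendsto_eLpNorm_indicator_zero_of_antitone [NormedAddCommGroup E] {p : ENNReal}
    (hp : p ≠ ⊤) {g : α → E} (hg : MemLp g p μ) {s : ℕ → Set α} (hs : Antitone s)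
    (hs_meas : ∀ N, MeasurableSet (s N)) (hs_inter : ⋂ N, s N = ∅) :
    Tendsto (fun N => eLpNorm ((s N).indicator g) p μ) atTop (𝓝 0) := by
  rcases eq_or_ne p 0 with rfl | hp0
  · simpa only [eLpNorm_exponent_zero] using tendsto_const_nhds
  have hlim := tendsto_setLIntegral_zero_of_antitone
    (lintegral_rpow_enorm_lt_top_of_eLpNorm_lt_top hp0 hp hg.2).ne hs hs_meas hs_inter
  have hroot := hlim.ennrpow_const (1 / p.toReal)
  rw [ENNReal.zero_rpow_of_pos (one_div_pos.2 (ENNReal.toReal_pos hp0 hp))] at hroot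
  simpa only [eLpNorm_indicator_eq_eLpNorm_restrict (hs_meas _),
    eLpNorm_eq_lintegral_rpow_enorm_toReal hp0 hp] using hroot

theorem tendsto_eLpNorm_sub_sum_indicator_disjointed [NormedAddCommGroup E] {p : ENNReal}
    (hp : p ≠ ⊤) {g : α → E} (hg : MemLp g p μ) (hB : Monotone B)
    (hB_meas : ∀ N, MeasurableSet (B N)) (hB_univ : ⋃ N, B N = Set.univ) :
    Tendsto (fun N => eLpNorm (fun x => g x - ∑ j ∈ range N, (disjointed B j).indicator g x) p μ)
      atTop (𝓝 0) := by
  have hremainder (N : ℕ) :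
      (fun x => g x - ∑ j ∈ range (N + 1), (disjointed B j).indicator g x) =
        (B N)ᶜ.indicator g := by
    rw [Set.indicator_compl, ← sum_indicator_disjointed hB]
    funext x
    simp only [Pi.sub_apply, Finset.sum_apply]
  rw [← tendsto_add_atTop_iff_nat 1]
  simp only [hremainder]
  exact tendsto_eLpNorm_indicator_zero_of_antitone hp hg
    (fun _ _ h => Set.compl_subset_compl.2 (hB h)) (fun N => (hB_meas N).compl)
    (by rw [← Set.compl_iUnion, hB_univ, Set.compl_univ])

theorem summable_and_tsum_le_integral_of_le_setIntegral {s : ℕ → Set α}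
    (hs_meas : ∀ j, MeasurableSet (s j)) (hs : Pairwise (Function.onFun Disjoint s))
    {f : α → ℝ} (hf : Integrable f μ) (hf_nonneg : 0 ≤ f) {a : ℕ → ℝ} (ha : ∀ j, 0 ≤ a j)
    (ha_le : ∀ j, a j ≤ ∫ x in s j, f x ∂μ) :
    Summable a ∧ ∑' j, a j ≤ ∫ x, f x ∂μ := by
  have hsum := hasSum_integral_iUnion hs_meas hs hf.integrableOn
  have ha_summable := hsum.summable.of_nonneg_of_le ha ha_le
  refine ⟨ha_summable, (ha_summable.tsum_le_tsum ha_le hsum.summable).trans ?_⟩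
  rw [hsum.tsum_eq]
  exact setIntegral_le_integral hf (Eventually.of_forall hf_nonneg)

end DisjointedPieces

section ExponentialWeight

variable {α E : Type*} [NormedAddCommGroup E] {h : α → E} {φ : α → ℝ} {c : ℝ}

theorem exp_mul_norm_sq_le_of_le_on_support (hφ : ∀ x ∈ Function.support h, φ x ≤ c) (x : α) :
    Real.exp (2 * φ x) * ‖h x‖ ^ 2 ≤ Real.exp (2 * c) * ‖h x‖ ^ 2 := by
  by_cases hx : h x = 0
  · simp [hx]
  · have := hφ x hx
    gcongr

variable [MeasurableSpace α] {μ : Measure α}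

theorem integrable_exp_mul_norm_sq (hh : MemLp h 2 μ) (hφ_meas : AEMeasurable φ μ)
    (hφ : ∀ x ∈ Function.support h, φ x ≤ c) :
    Integrable (fun x => Real.exp (2 * φ x) * ‖h x‖ ^ 2) μ := by
  have hsq := (memLp_two_iff_integrable_sq_norm hh.1).1 hh
  refine (hsq.const_mul (Real.exp (2 * c))).mono'
    ((hφ_meas.const_mul 2).exp.aestronglyMeasurable.mul hsq.1) (Eventually.of_forall fun x => ?_)
  rw [Real.norm_of_nonneg (by positivity)]
  exact exp_mul_norm_sq_le_of_le_on_support hφ x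

theorem exp_neg_mul_integral_exp_mul_norm_sq_le (hh : MemLp h 2 μ) (hφ_meas : AEMeasurable φ μ)
    (hφ : ∀ x ∈ Function.support h, φ x ≤ c) :
    Real.exp (-2 * c) * ∫ x, Real.exp (2 * φ x) * ‖h x‖ ^ 2 ∂μ ≤ ∫ x, ‖h x‖ ^ 2 ∂μ := by
  have hsq := (memLp_two_iff_integrable_sq_norm hh.1).1 hh
  have hle := integral_mono (integrable_exp_mul_norm_sq hh hφ_meas hφ)
    (hsq.const_mul (Real.exp (2 * c))) (exp_mul_norm_sq_le_of_le_on_support hφ)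
  rwa [integral_const_mul, ← inv_mul_le_iff₀ (Real.exp_pos _), ← Real.exp_neg, ← neg_mul] at hle

end ExponentialWeight

section Shells

variable {V : Type*} [SeminormedAddCommGroup V] {r : ℕ → ℝ}

/-- The successive shells cut out by the closed balls of radii `r j` centred at the origin: for
monotone `r`, shell `0` is the ball `‖ξ‖ ≤ r 0` and shell `j + 1` is `r j < ‖ξ‖ ≤ r (j + 1)`. -/
def shell (V : Type*) [SeminormedAddCommGroup V] (r : ℕ → ℝ) : ℕ → Set V :=
  disjointed fun j => Metric.closedBall 0 (r j)

theorem norm_le_of_mem_shell {j : ℕ} {ξ : V} (hξ : ξ ∈ shell V r j) : ‖ξ‖ ≤ r j :=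
  mem_closedBall_zero_iff.1 (disjointed_subset _ j hξ)

theorem lt_norm_of_mem_shell {i j : ℕ} (hij : i < j) {ξ : V} (hξ : ξ ∈ shell V r j) :
    r i < ‖ξ‖ := by
  rw [shell, disjointed_eq_inter_compl] at hξ
  simpa only [Set.mem_compl_iff, mem_closedBall_zero_iff, not_le] using
    Set.mem_iInter₂.1 hξ.2 i hij

theorem radius_pow_le_of_mem_shell {q : ℝ} (hr : ∀ j, 0 ≤ r j) (hq : 0 ≤ q)
    (hrq : ∀ j, r (j + 1) ≤ q * r j) (m : ℕ) {j : ℕ} {ξ : V} (hξ : ξ ∈ shell V r j) :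
    r j ^ m ≤ r 0 ^ m + (q * ‖ξ‖) ^ m := by
  rcases j with _ | j
  · exact le_add_of_nonneg_right (by positivity)
  · have hle : r (j + 1) ≤ q * ‖ξ‖ := (hrq j).trans <| by
      gcongr
      exact (lt_norm_of_mem_shell j.lt_succ_self hξ).le
    exact (pow_le_pow_left₀ (hr _) hle m).trans
      (le_add_of_nonneg_left (pow_nonneg (hr 0) m))

theorem monotone_closedBall_zero (hr : Monotone r) :
    Monotone fun j => Metric.closedBall (0 : V) (r j) :=
  fun _ _ h => Metric.closedBall_subset_closedBall (hr h)

theorem iUnion_closedBall_zero_eq_univ (hr : Tendsto r atTop atTop) :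
    ⋃ j, Metric.closedBall (0 : V) (r j) = Set.univ := by
  refine Set.eq_univ_of_forall fun ξ => Set.mem_iUnion.2 ?_
  simpa only [mem_closedBall_zero_iff] using (hr.eventually_ge_atTop ‖ξ‖).exists

theorem comp_norm_le_on_support_indicator_shell {E : Type*} [Zero E] {w : ℝ → ℝ}
    (hw : MonotoneOn w (Set.Ici 0)) (g : V → E) (j : ℕ) (ξ : V)
    (hξ : ξ ∈ Function.support ((shell V r j).indicator g)) : w ‖ξ‖ ≤ w (r j) := by
  have hle := norm_le_of_mem_shell (Set.support_indicator_subset hξ)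
  exact hw (norm_nonneg ξ) ((norm_nonneg ξ).trans hle) hle

variable [MeasurableSpace V] {E : Type*} [NormedAddCommGroup E] {g : V → E} {μ : Measure V}
  {w : ℝ → ℝ}

/-- The term contributed by a piece `h` of radius `ρ` to the energy of a shell decomposition: up
to the factor `ρ ^ (2 * k)`, the squared `L²` norm of `h` plus its squared norm with weight
`exp (w ‖ξ‖)`, the latter normalized at the radius `ρ`. -/
def weightedEnergy (μ : Measure V) (w : ℝ → ℝ) (k : ℕ) (ρ : ℝ) (h : V → E) : ℝ :=
  ρ ^ (2 * k) * ((∫ ξ, ‖h ξ‖ ^ 2 ∂μ) +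
    Real.exp (-2 * w ρ) * ∫ ξ, Real.exp (2 * w ‖ξ‖) * ‖h ξ‖ ^ 2 ∂μ)

theorem weightedEnergy_nonneg (k : ℕ) (ρ : ℝ) (h : V → E) : 0 ≤ weightedEnergy μ w k ρ h :=
  mul_nonneg ((even_two_mul k).pow_nonneg ρ) (by positivity)

variable [OpensMeasurableSpace V]

theorem measurableSet_shell (r : ℕ → ℝ) (j : ℕ) : MeasurableSet (shell V r j) :=
  MeasurableSet.disjointed (fun _ => measurableSet_closedBall) j

theorem measurable_comp_norm_of_monotoneOn (hw : MonotoneOn w (Set.Ici 0)) :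
    Measurable fun ξ : V => w ‖ξ‖ := by
  have hnorm : Measurable fun ξ : V => (⟨‖ξ‖, norm_nonneg ξ⟩ : Set.Ici (0 : ℝ)) :=
    continuous_norm.measurable.subtype_mk
  exact (Set.monotoneOn_iff_monotone.1 hw).measurable.comp hnorm

theorem weightedEnergy_indicator_shell_le (hw : MonotoneOn w (Set.Ici 0)) (hg : MemLp g 2 μ)
    (k j : ℕ) : weightedEnergy μ w k (r j) ((shell V r j).indicator g) ≤
      2 * (r j ^ (2 * k) * ∫ ξ in shell V r j, ‖g ξ‖ ^ 2 ∂μ) := by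
  have hpiece : ∫ ξ, ‖(shell V r j).indicator g ξ‖ ^ 2 ∂μ =
      ∫ ξ in shell V r j, ‖g ξ‖ ^ 2 ∂μ := by
    rw [← integral_indicator (measurableSet_shell r j)]
    congr 1 with ξ
    by_cases hξ : ξ ∈ shell V r j <;> simp [hξ]
  have hmem : MemLp ((shell V r j).indicator g) 2 μ := hg.indicator (measurableSet_shell r j)
  have hexp := exp_neg_mul_integral_exp_mul_norm_sq_le hmem
    (measurable_comp_norm_of_monotoneOn hw).aemeasurable
    (comp_norm_le_on_support_indicator_shell hw g j)
  rw [hpiece] at hexp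
  calc weightedEnergy μ w k (r j) ((shell V r j).indicator g)
      ≤ r j ^ (2 * k) *
          ((∫ ξ in shell V r j, ‖g ξ‖ ^ 2 ∂μ) + ∫ ξ in shell V r j, ‖g ξ‖ ^ 2 ∂μ) := by
        rw [weightedEnergy, hpiece]
        have := (even_two_mul k).pow_nonneg (r j)
        gcongr
    _ = 2 * (r j ^ (2 * k) * ∫ ξ in shell V r j, ‖g ξ‖ ^ 2 ∂μ) := by ring

theorem summable_and_tsum_weightedEnergy_shell_le (hw : MonotoneOn w (Set.Ici 0)) {q : ℝ}
    (hr : ∀ j, 0 ≤ r j) (hq : 0 ≤ q) (hrq : ∀ j, r (j + 1) ≤ q * r j) (hg : MemLp g 2 μ)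
    {k : ℕ} (hgk : Integrable (fun ξ => ‖ξ‖ ^ (2 * k) * ‖g ξ‖ ^ 2) μ) :
    Summable (fun j => weightedEnergy μ w k (r j) ((shell V r j).indicator g)) ∧
      ∑' j, weightedEnergy μ w k (r j) ((shell V r j).indicator g) ≤
        2 * (r 0 ^ (2 * k) * ∫ ξ, ‖g ξ‖ ^ 2 ∂μ) +
          2 * (q ^ (2 * k) * ∫ ξ, ‖ξ‖ ^ (2 * k) * ‖g ξ‖ ^ 2 ∂μ) := by
  have hg_sq := (memLp_two_iff_integrable_sq_norm hg.1).1 hg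
  let F : V → ℝ := fun ξ =>
    2 * (r 0 ^ (2 * k) * ‖g ξ‖ ^ 2) + 2 * (q ^ (2 * k) * (‖ξ‖ ^ (2 * k) * ‖g ξ‖ ^ 2))
  have hF₀ := (hg_sq.const_mul (r 0 ^ (2 * k))).const_mul 2
  have hF₁ := (hgk.const_mul (q ^ (2 * k))).const_mul 2
  have hF : Integrable F μ := hF₀.add hF₁
  have hF_nonneg : 0 ≤ F := fun ξ => by
    have := hr 0
    positivity
  have hle (j : ℕ) : weightedEnergy μ w k (r j) ((shell V r j).indicator g) ≤
      ∫ ξ in shell V r j, F ξ ∂μ := by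
    refine (weightedEnergy_indicator_shell_le hw hg k j).trans ?_
    rw [← integral_const_mul, ← integral_const_mul]
    refine setIntegral_mono_on ((hg_sq.const_mul _).const_mul 2).integrableOn hF.integrableOn
      (measurableSet_shell r j) fun ξ hξ => ?_
    calc 2 * (r j ^ (2 * k) * ‖g ξ‖ ^ 2)
        ≤ 2 * ((r 0 ^ (2 * k) + (q * ‖ξ‖) ^ (2 * k)) * ‖g ξ‖ ^ 2) := by
          gcongr
          exact radius_pow_le_of_mem_shell hr hq hrq (2 * k) hξ
      _ = F ξ := by ring
  have hsum := summable_and_tsum_le_integral_of_le_setIntegral (measurableSet_shell r)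
    (disjoint_disjointed _) hF hF_nonneg (fun j => weightedEnergy_nonneg k (r j) _) hle
  simpa only [F, integral_add hF₀ hF₁, integral_const_mul] using hsum

end Shells

section Sobolev

variable {n k : ℕ} {g : Esp n → ℂ}

/-- The Sobolev norm of order `k` with parameter `ρ`, read on the Fourier side: the `L²` norm of
`ξ^α g` enters with the factor `ρ ^ (k - |α|)`, for every `|α| ≤ k`. -/
def sobolevSum (ρ : ℝ) (k : ℕ) (g : Esp n → ℂ) : ℝ :=
  ∑ α ∈ midx n k, ρ ^ (k - degree α) * L2C (fun ξ => mon α ξ • g ξ)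

theorem mem_midx {α : Fin n → ℕ} : α ∈ midx n k ↔ degree α ≤ k := by
  simp only [midx, mem_filter, Fintype.mem_piFinset, mem_range, and_iff_right_iff_imp]
  exact fun h i => Nat.lt_succ_of_le ((single_le_sum_of_canonicallyOrdered (mem_univ i)).trans h)

theorem degree_single (i : Fin n) (k : ℕ) : degree (Pi.single i k) = k := by
  simp [degree]

theorem mon_single (i : Fin n) (k : ℕ) (ξ : Esp n) : mon (Pi.single i k) ξ = ξ i ^ k := by
  rw [mon, prod_eq_single i (fun j _ hj => by simp [hj]) (by simp), Pi.single_eq_same]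

theorem norm_mon_single_smul_sq (i : Fin n) (k : ℕ) (ξ : Esp n) (z : ℂ) :
    ‖mon (Pi.single i k) ξ • z‖ ^ 2 = ξ i ^ (2 * k) * ‖z‖ ^ 2 := by
  rw [norm_smul, mul_pow, Real.norm_eq_abs, sq_abs, mon_single, ← pow_mul, mul_comm k]

theorem L2C_nonneg (g : Esp n → ℂ) : 0 ≤ L2C g :=
  Real.rpow_nonneg (integral_nonneg fun _ => by positivity) _

theorem L2C_sq (g : Esp n → ℂ) : L2C g ^ 2 = ∫ ξ, ‖g ξ‖ ^ 2 := by
  rw [L2C, ← Real.sqrt_eq_rpow, Real.sq_sqrt (integral_nonneg fun _ => by positivity)]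

theorem pow_mul_integral_norm_mon_smul_sq_le {ρ : ℝ} (hρ : 0 ≤ ρ) (g : Esp n → ℂ)
    {α : Fin n → ℕ} (hα : degree α ≤ k) :
    ρ ^ (2 * (k - degree α)) * ∫ ξ, ‖mon α ξ • g ξ‖ ^ 2 ≤ sobolevSum ρ k g ^ 2 := by
  have hterm_nonneg (β : Fin n → ℕ) :
      0 ≤ ρ ^ (k - degree β) * L2C (fun ξ => mon β ξ • g ξ) :=
    mul_nonneg (pow_nonneg hρ _) (L2C_nonneg _)
  have hterm_le : ρ ^ (k - degree α) * L2C (fun ξ => mon α ξ • g ξ) ≤ sobolevSum ρ k g :=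
    single_le_sum (f := fun β => ρ ^ (k - degree β) * L2C (fun ξ => mon β ξ • g ξ))
      (fun β _ => hterm_nonneg β) (mem_midx.2 hα)
  calc ρ ^ (2 * (k - degree α)) * ∫ ξ, ‖mon α ξ • g ξ‖ ^ 2
      = (ρ ^ (k - degree α) * L2C (fun ξ => mon α ξ • g ξ)) ^ 2 := by
        rw [mul_pow, L2C_sq, ← pow_mul, mul_comm 2]
    _ ≤ sobolevSum ρ k g ^ 2 := pow_le_pow_left₀ (hterm_nonneg α) hterm_le 2

theorem pow_mul_integral_norm_sq_le {ρ : ℝ} (hρ : 0 ≤ ρ) (k : ℕ) (g : Esp n → ℂ) :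
    ρ ^ (2 * k) * ∫ ξ, ‖g ξ‖ ^ 2 ≤ sobolevSum ρ k g ^ 2 := by
  simpa [degree, mon] using
    pow_mul_integral_norm_mon_smul_sq_le hρ g (k := k) (α := 0) (by simp [degree])

theorem integral_coord_pow_mul_norm_sq_le {ρ : ℝ} (hρ : 0 ≤ ρ) (k : ℕ) (g : Esp n → ℂ)
    (i : Fin n) : ∫ ξ : Esp n, ξ i ^ (2 * k) * ‖g ξ‖ ^ 2 ≤ sobolevSum ρ k g ^ 2 := by
  simpa only [degree_single, Nat.sub_self, mul_zero, pow_zero, one_mul, norm_mon_single_smul_sq]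
    using pow_mul_integral_norm_mon_smul_sq_le hρ g (degree_single i k).le

theorem norm_pow_two_mul_le_card_pow_mul_sum {ι : Type*} [Fintype ι] (hk : k ≠ 0)
    (x : EuclideanSpace ℝ ι) :
    ‖x‖ ^ (2 * k) ≤ (Fintype.card ι : ℝ) ^ (k - 1) * ∑ i, x i ^ (2 * k) := by
  obtain ⟨m, rfl⟩ := Nat.exists_eq_add_one_of_ne_zero hk
  simpa only [pow_mul, EuclideanSpace.real_norm_sq_eq, card_univ, Nat.add_sub_cancel] using
    pow_sum_le_card_mul_sum_pow (s := univ) (f := fun i => x i ^ 2) (fun i _ => sq_nonneg _) m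

theorem norm_pow_mul_norm_sq_le (hk : k ≠ 0) (ξ : Esp n) (z : ℂ) :
    ‖ξ‖ ^ (2 * k) * ‖z‖ ^ 2 ≤ (n : ℝ) ^ (k - 1) * ∑ i, ξ i ^ (2 * k) * ‖z‖ ^ 2 := by
  rw [← sum_mul, ← mul_assoc]
  gcongr
  simpa only [Fintype.card_fin] using norm_pow_two_mul_le_card_pow_mul_sum hk ξ

theorem integrable_coord_pow_mul_norm_sq {i : Fin n}
    (hg : MemLp (fun ξ => mon (Pi.single i k) ξ • g ξ) 2 volume) :
    Integrable fun ξ : Esp n => ξ i ^ (2 * k) * ‖g ξ‖ ^ 2 := by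
  simpa only [norm_mon_single_smul_sq] using (memLp_two_iff_integrable_sq_norm hg.1).1 hg

theorem integrable_norm_pow_mul_norm_sq (hk : k ≠ 0) (hg : AEStronglyMeasurable g volume)
    (hgk : ∀ i, MemLp (fun ξ => mon (Pi.single i k) ξ • g ξ) 2 volume) :
    Integrable fun ξ : Esp n => ‖ξ‖ ^ (2 * k) * ‖g ξ‖ ^ 2 := by
  have hcoord (i : Fin n) := integrable_coord_pow_mul_norm_sq (hgk i)
  have hbound : Integrable fun ξ : Esp n =>
      (n : ℝ) ^ (k - 1) * ∑ i, ξ i ^ (2 * k) * ‖g ξ‖ ^ 2 :=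
    (integrable_finsetSum univ fun i _ => hcoord i).const_mul _
  have hmeas : AEStronglyMeasurable (fun ξ : Esp n => ‖ξ‖ ^ (2 * k) * ‖g ξ‖ ^ 2) volume :=
    (continuous_norm.pow (2 * k)).aestronglyMeasurable.mul (hg.norm.pow 2)
  refine hbound.mono' hmeas (Eventually.of_forall fun ξ => ?_)
  rw [Real.norm_of_nonneg (by positivity)]
  exact norm_pow_mul_norm_sq_le hk ξ (g ξ)

theorem integral_norm_pow_mul_norm_sq_le {ρ : ℝ} (hρ : 0 ≤ ρ) (hk : k ≠ 0)
    (hg : AEStronglyMeasurable g volume)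
    (hgk : ∀ i, MemLp (fun ξ => mon (Pi.single i k) ξ • g ξ) 2 volume) :
    ∫ ξ : Esp n, ‖ξ‖ ^ (2 * k) * ‖g ξ‖ ^ 2 ≤ (n : ℝ) ^ k * sobolevSum ρ k g ^ 2 := by
  have hcoord (i : Fin n) := integrable_coord_pow_mul_norm_sq (hgk i)
  calc ∫ ξ : Esp n, ‖ξ‖ ^ (2 * k) * ‖g ξ‖ ^ 2
      ≤ ∫ ξ : Esp n, (n : ℝ) ^ (k - 1) * ∑ i, ξ i ^ (2 * k) * ‖g ξ‖ ^ 2 :=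
        integral_mono (integrable_norm_pow_mul_norm_sq hk hg hgk)
          ((integrable_finsetSum univ fun i _ => hcoord i).const_mul _)
          fun ξ => norm_pow_mul_norm_sq_le hk ξ (g ξ)
    _ = (n : ℝ) ^ (k - 1) * ∑ i, ∫ ξ : Esp n, ξ i ^ (2 * k) * ‖g ξ‖ ^ 2 := by
        rw [integral_const_mul, integral_finsetSum univ fun i _ => hcoord i]
    _ ≤ (n : ℝ) ^ (k - 1) * ∑ _i : Fin n, sobolevSum ρ k g ^ 2 := by
        gcongr with i
        exact integral_coord_pow_mul_norm_sq_le hρ k g i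
    _ = (n : ℝ) ^ k * sobolevSum ρ k g ^ 2 := by
        rw [sum_const, card_univ, Fintype.card_fin, nsmul_eq_mul, ← mul_assoc,
          pow_sub_one_mul hk]

end Sobolev

section AssociatedWeight

variable {M : ℕ → ℝ}

theorem Lam_pos (hM : ∀ k, 0 < M k) (k : ℕ) : 0 < Lam M k :=
  Real.rpow_pos_of_pos (hM k) _

theorem Lam_pow (hM : ∀ k, 0 < M k) {k : ℕ} (hk : k ≠ 0) : Lam M k ^ k = M k :=
  Real.rpow_inv_natCast_pow (hM k).le hk

theorem bddAbove_range_log_pow_div (hM : ∀ k, 0 < M k) (hΛ : Tendsto (Lam M) atTop atTop)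
    {t : ℝ} (ht : 0 ≤ t) : BddAbove (Set.range fun k : ℕ => Real.log (t ^ k / M k)) := by
  refine IsBoundedUnder.bddAbove_range ⟨0, eventually_map.2 ?_⟩
  filter_upwards [hΛ.eventually_ge_atTop t, eventually_ne_atTop 0] with k htk hk
  have hpow : t ^ k ≤ M k := (pow_le_pow_left₀ ht htk k).trans_eq (Lam_pow hM hk)
  exact Real.log_nonpos (div_nonneg (pow_nonneg ht k) (hM k).le) ((div_le_one (hM k)).2 hpow)

theorem omegaM_nonneg (hM : ∀ k, 0 < M k) (hM₀ : M 0 ≤ 1) (hΛ : Tendsto (Lam M) atTop atTop)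
    {t : ℝ} (ht : 0 ≤ t) : 0 ≤ omegaM M t := by
  refine le_ciSup_of_le (bddAbove_range_log_pow_div hM hΛ ht) 0 (Real.log_nonneg ?_)
  rw [pow_zero]
  exact one_le_one_div (hM 0) hM₀

theorem monotoneOn_omegaM (hM : ∀ k, 0 < M k) (hM₀ : M 0 ≤ 1)
    (hΛ : Tendsto (Lam M) atTop atTop) : MonotoneOn (omegaM M) (Set.Ici 0) := by
  intro s hs t ht hst
  have hbdd := bddAbove_range_log_pow_div hM hΛ ht
  refine ciSup_le fun k => ?_
  rcases eq_or_ne (s ^ k) 0 with hsk | hsk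
  · -- `Real.log 0 = 0` stands in for `-∞`, so this term is harmless only because `0 ≤ ω_M`.
    simpa only [hsk, zero_div, Real.log_zero] using omegaM_nonneg hM hM₀ hΛ ht
  · have hs_pow : 0 < s ^ k := (pow_nonneg hs k).lt_of_ne' hsk
    exact le_ciSup_of_le hbdd k <| Real.log_le_log (div_pos hs_pow (hM k))
      (div_le_div_of_nonneg_right (pow_le_pow_left₀ hs hst k) (hM k).le)

end AssociatedWeight

section GeometricRadii

variable {r : ℕ → ℝ} {σ : ℝ}
  (hr : ∀ j, 1 ≤ j → σ ^ (j - 1) * r 0 ≤ r j ∧ r j ≤ σ ^ j * r 0)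

include hr

theorem le_pow_mul_of_bracketed (j : ℕ) : r j ≤ σ ^ j * r 0 := by
  rcases j with _ | j
  · simp
  · exact (hr (j + 1) j.succ_pos).2

theorem pow_mul_le_succ_of_bracketed (j : ℕ) : σ ^ j * r 0 ≤ r (j + 1) :=
  (hr (j + 1) j.succ_pos).1

theorem monotone_of_bracketed : Monotone r :=
  monotone_nat_of_le_succ fun j =>
    (le_pow_mul_of_bracketed hr j).trans (pow_mul_le_succ_of_bracketed hr j)

theorem succ_le_sq_mul_of_bracketed (hσ : 1 ≤ σ) (hr₀ : 0 ≤ r 0) (j : ℕ) :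
    r (j + 1) ≤ σ ^ 2 * r j := by
  rcases j with _ | j
  · calc r 1 ≤ σ ^ 1 * r 0 := le_pow_mul_of_bracketed hr 1
      _ ≤ σ ^ 2 * r 0 := by gcongr; norm_num
  · calc r (j + 2) ≤ σ ^ (j + 2) * r 0 := le_pow_mul_of_bracketed hr (j + 2)
      _ = σ ^ 2 * (σ ^ j * r 0) := by ring
      _ ≤ σ ^ 2 * r (j + 1) := by
        gcongr
        exact pow_mul_le_succ_of_bracketed hr j

theorem tendsto_atTop_of_bracketed (hσ : 1 < σ) (hr₀ : 0 < r 0) : Tendsto r atTop atTop :=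
  (tendsto_add_atTop_iff_nat 1).1 <| tendsto_atTop_mono (pow_mul_le_succ_of_bracketed hr)
    ((tendsto_pow_atTop_atTop_of_one_lt hσ).atTop_mul_const hr₀)

end GeometricRadii

theorem statement13_general {n : ℕ} {w : ℝ → ℝ} (hw : MonotoneOn w (Set.Ici 0)) {r : ℕ → ℝ}
    (hr₀ : 0 < r 0) (hr : Monotone r) (hr_top : Tendsto r atTop atTop) {q : ℝ}
    (hrq : ∀ j, r (j + 1) ≤ q * r j) {k : ℕ} (hk : k ≠ 0) {g : Esp n → ℂ}
    (hg : ∀ α : Fin n → ℕ, degree α ≤ k → MemLp (fun ξ => mon α ξ • g ξ) 2 volume) :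
    ∃ gj : ℕ → Esp n → ℂ,
      (∀ j, MemLp (gj j) 2 volume) ∧
      Tendsto (fun N => eLpNorm (fun ξ => g ξ - ∑ j ∈ range N, gj j ξ) 2 volume) atTop (nhds 0) ∧
      (∀ j, Integrable fun ξ => Real.exp (2 * w ‖ξ‖) * ‖gj j ξ‖ ^ 2) ∧
      Summable (fun j => weightedEnergy volume w k (r j) (gj j)) ∧
      ∑' j, weightedEnergy volume w k (r j) (gj j) ≤
        2 * (1 + n * q ^ 2) ^ k * sobolevSum (r 0) k g ^ 2 := by
  have hr_nonneg (j : ℕ) : 0 ≤ r j := hr₀.le.trans (hr j.zero_le)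
  have hq : 0 ≤ q :=
    (pos_of_mul_pos_left ((hr₀.trans_le (hr zero_le_one)).trans_le (hrq 0)) hr₀.le).le
  have hg₂ : MemLp g 2 volume := by simpa [mon] using hg 0 (by simp [degree])
  have hgk (i : Fin n) := hg (Pi.single i k) (degree_single i k).le
  have hpiece (j : ℕ) := hg₂.indicator (measurableSet_shell r j)
  obtain ⟨hsummable, htsum⟩ := summable_and_tsum_weightedEnergy_shell_le hw hr_nonneg hq hrq hg₂
    (integrable_norm_pow_mul_norm_sq hk hg₂.1 hgk)
  refine ⟨fun j => (shell (Esp n) r j).indicator g, hpiece,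
    tendsto_eLpNorm_sub_sum_indicator_disjointed ENNReal.ofNat_ne_top hg₂
      (monotone_closedBall_zero hr) (fun _ => measurableSet_closedBall)
      (iUnion_closedBall_zero_eq_univ hr_top),
    fun j => integrable_exp_mul_norm_sq (hpiece j)
      (measurable_comp_norm_of_monotoneOn hw).aemeasurable
      (comp_norm_le_on_support_indicator_shell hw g j), hsummable, htsum.trans ?_⟩
  calc 2 * (r 0 ^ (2 * k) * ∫ ξ, ‖g ξ‖ ^ 2) +
        2 * (q ^ (2 * k) * ∫ ξ : Esp n, ‖ξ‖ ^ (2 * k) * ‖g ξ‖ ^ 2)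
      ≤ 2 * sobolevSum (r 0) k g ^ 2 +
          2 * (q ^ (2 * k) * ((n : ℝ) ^ k * sobolevSum (r 0) k g ^ 2)) := by
        gcongr
        · exact pow_mul_integral_norm_sq_le hr₀.le k g
        · exact integral_norm_pow_mul_norm_sq_le hr₀.le hk hg₂.1 hgk
    _ = 2 * (1 ^ k + (n * q ^ 2) ^ k) * sobolevSum (r 0) k g ^ 2 := by ring
    _ ≤ 2 * (1 + n * q ^ 2) ^ k * sobolevSum (r 0) k g ^ 2 := by
        gcongr
        exact pow_add_pow_le zero_le_one (by positivity) hk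

/-- (Lemma 5 of the paper), stated on the Fourier transform side: here
`g` plays the role of the Fourier–Plancherel transform `û` of `u ∈ H^k(ℝ^n)` and `gj j` the
role of `û_j`; by Plancherel's theorem, `L²` norms and `L²` convergence of the `u_j` are
equivalent to those of the `ĝ_j`.  There are constants `C, γ > 0` depending only on `M` and
`σ` such that for every `k ≥ 1`, every sequence `(k_j)` as in Lemma 1 and every `g ∈ L²` with
`ξ^α g ∈ L²` for `|α| ≤ k`, one can decompose `g = ∑ g_j` in `L²` with
`‖e^{ω_M(|ξ|)} g_j‖_{L²} < ∞` and
`∑_j Λ_{k_j}^{2k} (‖g_j‖² + e^{-2ω_M(Λ_{k_j})} ‖e^{ω_M(|ξ|)} g_j‖²)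
  ≤ C γ^k (∑_{|α|≤k} Λ_k^{k-|α|} ‖ξ^α g‖_{L²})²`. -/
theorem statement13 {n : ℕ} (M : ℕ → ℝ) (hM : IsAdmissible M)
    (σ : ℝ) (hσ : 1 < σ) (hσΛ : ∀ m : ℕ, 1 ≤ m → Lam M (m + 1) ≤ σ * Lam M m) :
    ∃ C > 0, ∃ γ > 0, ∀ k : ℕ, 1 ≤ k → ∀ kj : ℕ → ℕ, (∀ j, 1 ≤ kj j) → kj 0 = k →
      (∀ j : ℕ, 1 ≤ j →
        σ ^ (j - 1) * Lam M k ≤ Lam M (kj j) ∧ Lam M (kj j) ≤ σ ^ j * Lam M k) →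
      ∀ g : Esp n → ℂ,
      (∀ α : Fin n → ℕ, degree α ≤ k →
        MemLp (fun ξ => mon α ξ • g ξ) 2 (volume : Measure (Esp n))) →
      ∃ gj : ℕ → Esp n → ℂ,
        (∀ j, MemLp (gj j) 2 (volume : Measure (Esp n))) ∧
        Tendsto (fun N => eLpNorm (fun ξ => g ξ - ∑ j ∈ Finset.range N, gj j ξ) 2
          (volume : Measure (Esp n))) atTop (nhds 0) ∧
        (∀ j, Integrable
          (fun ξ : Esp n => Real.exp (2 * omegaM M ‖ξ‖) * ‖gj j ξ‖ ^ 2) volume) ∧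
        Summable (fun j => (Lam M (kj j)) ^ (2 * k) *
          ((∫ ξ : Esp n, ‖gj j ξ‖ ^ 2) + Real.exp (-2 * omegaM M (Lam M (kj j))) *
            ∫ ξ : Esp n, Real.exp (2 * omegaM M ‖ξ‖) * ‖gj j ξ‖ ^ 2)) ∧
        (∑' j, (Lam M (kj j)) ^ (2 * k) *
          ((∫ ξ : Esp n, ‖gj j ξ‖ ^ 2) + Real.exp (-2 * omegaM M (Lam M (kj j))) *
            ∫ ξ : Esp n, Real.exp (2 * omegaM M ‖ξ‖) * ‖gj j ξ‖ ^ 2)) ≤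
          C * γ ^ k * (∑ α ∈ midx n k,
            (Lam M k) ^ (k - degree α) * L2C (fun ξ => mon α ξ • g ξ)) ^ 2 := by
  obtain ⟨⟨hM_pos, hM₀, -, -, hΛ⟩, -⟩ := hM
  refine ⟨2, two_pos, 1 + n * (σ ^ 2) ^ 2, by positivity, ?_⟩
  rintro k hk kj - rfl hkj g hg
  have hΛ_pos := Lam_pos hM_pos (kj 0)
  exact statement13_general (r := fun j => Lam M (kj j)) (monotoneOn_omegaM hM_pos hM₀.le hΛ)
    hΛ_pos (monotone_of_bracketed hkj) (tendsto_atTop_of_bracketed hkj hσ hΛ_pos)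
    (succ_le_sq_mul_of_bracketed (r := fun j => Lam M (kj j)) hkj hσ.le hΛ_pos.le)
    (Nat.one_le_iff_ne_zero.1 hk) hg

end
end

section
/- Let Ω ⊆ ℝ^n be open, M an admissible weight sequence, and P = Σ_{|α|≤m} a_α ∂^α a linear partial differential operator whose coefficients a_α belong to the Denjoy–Carleman class E^{M}(Ω); let P^t φ = Σ_{|α|≤m} (−1)^{|α|} ∂^α(a_α φ) denote its formal transpose. Suppose there is an open set U₀ ⊆ Ω with the following property: for all open sets V ⋐ U ⊆ U₀, every u ∈ L²(U) with ∫_U u · P^t φ dx = 0 for all φ ∈ C_c^∞(U) agrees almost everywhere on V with a function ũ ∈ C^∞(V) for which there exist C', h' > 0 with sup_V |∂^α ũ| ≤ C' (h')^{|α|} M_{|α|} for all α. Then for all open sets V ⋐ U ⊆ U₀ there exist constants C, h > 0 such that for every k ≥ 0 and every u ∈ L²(U) with ∫_U u · P^t φ dx = 0 for all φ ∈ C_c^∞(U), the smooth representative ũ of u on V satisfies ( Σ_{|α|≤k} ‖∂^α ũ‖²_{L²(V)} )^{1/2} ≤ C h^k M_k ‖u‖_{L²(U)}. -/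
open MeasureTheory Filter Finset

noncomputable section

/-- Partial derivative in the `i`-th coordinate direction. -/
def pd {n : ℕ} (i : Fin n) (f : (Fin n → ℝ) → ℝ) : (Fin n → ℝ) → ℝ :=
  fun x => fderiv ℝ f x (Pi.single i 1)

/-- The multi-index derivative `∂^α f`. -/
def mderiv {n : ℕ} (α : Fin n → ℕ) (f : (Fin n → ℝ) → ℝ) : (Fin n → ℝ) → ℝ :=
  ((List.finRange n).flatMap fun i => List.replicate (α i) i).foldr pd f

/-- The Denjoy–Carleman class `E^{M}(Ω)`: smooth functions on `Ω` such that on every compact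
`K ⊆ Ω` the derivatives satisfy `|∂^α f| ≤ C h^{|α|} M_{|α|}`. -/
def DCclass {n : ℕ} (M : ℕ → ℝ) (Ω : Set (Fin n → ℝ)) : Set ((Fin n → ℝ) → ℝ) :=
  {f | ContDiffOn ℝ (⊤ : ℕ∞) f Ω ∧ ∀ K : Set (Fin n → ℝ), K ⊆ Ω → IsCompact K →
    ∃ C > 0, ∃ h > 0, ∀ (α : Fin n → ℕ), ∀ x ∈ K,
      |mderiv α f x| ≤ C * h ^ degree α * M (degree α)}

/-- The formal transpose `P^t φ = ∑_{|α| ≤ m} (-1)^{|α|} ∂^α (a_α φ)` of the operator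
`P = ∑_{|α| ≤ m} a_α ∂^α`. -/
def transposeOp {n : ℕ} (m : ℕ) (a : (Fin n → ℕ) → (Fin n → ℝ) → ℝ)
    (φ : (Fin n → ℝ) → ℝ) : (Fin n → ℝ) → ℝ :=
  fun x => ∑ α ∈ midx n m, (-1 : ℝ) ^ degree α * mderiv α (fun y => a α y * φ y) x

/-- `u ∈ L²(U)` is a weak (distributional) solution of `Pu = 0` in `U`:
`∫_U u P^t φ = 0` for every test function `φ ∈ C_c^∞(U)`. -/
def WeakKernel {n : ℕ} (m : ℕ) (a : (Fin n → ℕ) → (Fin n → ℝ) → ℝ)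
    (U : Set (Fin n → ℝ)) (u : (Fin n → ℝ) → ℝ) : Prop :=
  ∀ φ : (Fin n → ℝ) → ℝ, ContDiff ℝ (⊤ : ℕ∞) φ → HasCompactSupport φ →
    tsupport φ ⊆ U → ∫ x in U, u x * transposeOp m a φ x = 0

/-!
Proof idea: uniform boundedness. Pairing `u` with the transposed derivative of a test function `ψ`
on `V` gives functionals `u ↦ ∫ u · (-∂)^α ψ`, continuous on `L²(U)`, and a smooth representative
of `u` satisfies `|∂^α ũ| ≤ C h^|α| M_|α|` on `V` if and only if all of them are bounded by
`C h^|α| M_|α| ‖ψ‖_{L¹}`. By hypothesis each weak solution obeys such bounds with constants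
`C = h = N` for some integer `N`; the weak solutions form a Banach space and the solutions admitting
a given `N` form a closed set, so Baire's theorem makes one `N` work for the whole unit ball.
Only finitely many, at most `2^(nk)`, derivatives have order at most `k`, and `V` has finite volume,
so the bound in the supremum norm implies the one in `L²`.
-/

section

open TopologicalSpace (Opens)
open scoped Distributions LineDeriv ContDiff

section UniformBoundedness

variable {𝕜 E ι κ : Type*} [RCLike 𝕜] [NormedAddCommGroup E] [NormedSpace 𝕜 E] [CompleteSpace E]
  [Countable κ]

theorem exists_forall_norm_le_mul_of_forall_exists_norm_le (ℓ : ι → StrongDual 𝕜 E)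
    (w : κ → ι → ℝ) (h : ∀ x, ∃ k, ∀ i, ‖ℓ i x‖ ≤ w k i) :
    ∃ k, ∃ C > 0, ∀ i x, ‖ℓ i x‖ ≤ C * w k i * ‖x‖ := by
  let S (k : κ) : Set E := {x | ∀ i, ‖ℓ i x‖ ≤ w k i}
  have isClosed_S (k : κ) : IsClosed (S k) := by
    simp only [S, Set.ofPred_forall]
    exact isClosed_iInter fun i ↦ isClosed_le (ℓ i).continuous.norm continuous_const
  have iUnion_S : ⋃ k, S k = Set.univ := Set.iUnion_eq_univ_iff.2 h
  obtain ⟨k, x₀, hx₀⟩ := nonempty_interior_of_iUnion_of_closed isClosed_S iUnion_S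
  obtain ⟨r, hr, hball⟩ := Metric.nhds_basis_closedBall.mem_iff.1 (mem_interior_iff_mem_nhds.1 hx₀)
  refine ⟨k, 2 / r, by positivity, fun i x ↦ ?_⟩
  have bound_on_ball : ∀ z ∈ Metric.closedBall (0 : E) r, ‖ℓ i z‖ ≤ 2 * w k i := fun z hz ↦
    calc ‖ℓ i z‖ = ‖ℓ i (x₀ + z) - ℓ i x₀‖ := by rw [map_add, add_sub_cancel_left]
      _ ≤ ‖ℓ i (x₀ + z)‖ + ‖ℓ i x₀‖ := norm_sub_le _ _
      _ ≤ w k i + w k i :=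
        add_le_add (hball (by simpa using hz) i) (hball (Metric.mem_closedBall_self hr.le) i)
      _ = 2 * w k i := (two_mul _).symm
  exact (LinearMap.bound_of_ball_bound' hr _ (ℓ i).toLinearMap bound_on_ball x).trans_eq (by ring)

end UniformBoundedness

section Duality

variable {E : Type*} [NormedAddCommGroup E] [NormedSpace ℝ E] {V : Opens E} {g : E → ℝ} {B : ℝ}

theorem testFunction_eq_zero (ψ : 𝓓(V, ℝ)) {x : E} (hx : x ∉ V) : ψ x = 0 :=
  image_eq_zero_of_notMem_tsupport fun h ↦ hx (ψ.tsupport_subset h)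

theorem exists_testFunction_eq_mul (hg : ContDiffOn ℝ ∞ g V) (φ : 𝓓(V, ℝ)) :
    ∃ ψ : 𝓓(V, ℝ), ⇑ψ = fun x ↦ g x * φ x := by
  have tsupport_subset : tsupport (fun x ↦ g x * φ x) ⊆ V :=
    tsupport_mul_subset_right.trans φ.tsupport_subset
  have smooth : ContDiff ℝ ∞ fun x ↦ g x * φ x :=
    contMDiff_iff_contDiff.1 <| contMDiff_of_tsupport fun x hx ↦
      ((hg.contDiffAt (V.isOpen.mem_nhds (tsupport_subset hx))).mul
        φ.contDiff.contDiffAt).contMDiffAt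
  exact ⟨⟨_, smooth, φ.hasCompactSupport.mul_left, tsupport_subset⟩, rfl⟩

variable [MeasurableSpace E] {μ : Measure E}

theorem setIntegral_mul_testFunction_congr {U : Set E} (hVU : (V : Set E) ⊆ U) {u v : E → ℝ}
    (huv : ∀ᵐ x ∂μ, x ∈ V → u x = v x) (ψ : 𝓓(V, ℝ)) :
    ∫ x in U, u x * ψ x ∂μ = ∫ x, v x * ψ x ∂μ := by
  rw [setIntegral_eq_integral_of_forall_compl_eq_zero
    fun x hx ↦ by rw [testFunction_eq_zero ψ fun h ↦ hx (hVU h), mul_zero]]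
  refine integral_congr_ae ?_
  filter_upwards [huv] with x hx
  by_cases hxV : x ∈ V
  · rw [hx hxV]
  · rw [testFunction_eq_zero ψ hxV, mul_zero, mul_zero]

variable [BorelSpace E]

theorem integrable_testFunction [IsFiniteMeasureOnCompacts μ] (ψ : 𝓓(V, ℝ)) : Integrable ψ μ :=
  ψ.continuous.integrable_of_hasCompactSupport ψ.hasCompactSupport

theorem integrable_mul_testFunction [IsFiniteMeasureOnCompacts μ] (hg : ContinuousOn g V)
    (ψ : 𝓓(V, ℝ)) : Integrable (fun x ↦ g x * ψ x) μ := by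
  have continuous_mul : Continuous fun x ↦ g x * ψ x :=
    (hg.mul ψ.continuous.continuousOn).continuous_of_tsupport_subset V.isOpen
      (tsupport_mul_subset_right.trans ψ.tsupport_subset)
  exact continuous_mul.integrable_of_hasCompactSupport ψ.hasCompactSupport.mul_left

theorem abs_integral_mul_testFunction_le [IsFiniteMeasureOnCompacts μ]
    (hg : ∀ x ∈ V, |g x| ≤ B) (ψ : 𝓓(V, ℝ)) : |∫ x, g x * ψ x ∂μ| ≤ B * ∫ x, |ψ x| ∂μ := by
  rw [← integral_const_mul, ← Real.norm_eq_abs]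
  refine norm_integral_le_of_norm_le ((integrable_testFunction ψ).abs.const_mul B)
    (.of_forall fun x ↦ ?_)
  rw [norm_mul, Real.norm_eq_abs, Real.norm_eq_abs]
  by_cases hx : x ∈ V
  · exact mul_le_mul_of_nonneg_right (hg x hx) (abs_nonneg _)
  · simp [testFunction_eq_zero ψ hx]

variable [FiniteDimensional ℝ E] [IsFiniteMeasureOnCompacts μ] [μ.IsOpenPosMeasure]

theorem exists_testFunction_integral_pos {x : E} (hx : x ∈ V) {s : Set E} (hs : s ∈ nhds x) :
    ∃ ψ : 𝓓(V, ℝ), (∀ y, 0 ≤ ψ y) ∧ tsupport ψ ⊆ s ∧ 0 < ∫ y, ψ y ∂μ := by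
  obtain ⟨f, f_supp, f_compact, f_smooth, f_range, hfx⟩ :=
    exists_contDiff_tsupport_subset (n := ⊤) (inter_mem hs (V.isOpen.mem_nhds hx))
  have f_nonneg (y : E) : 0 ≤ f y := (f_range ⟨y, rfl⟩).1
  refine ⟨⟨f, f_smooth, f_compact, fun y hy ↦ (f_supp hy).2⟩, f_nonneg,
    fun y hy ↦ (f_supp hy).1, ?_⟩
  exact f_smooth.continuous.integral_pos_of_hasCompactSupport_nonneg_nonzero f_compact f_nonneg
    (hfx ▸ one_ne_zero)

theorem le_of_forall_integral_mul_testFunction_le (hg : ContinuousOn g V)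
    (h : ∀ ψ : 𝓓(V, ℝ), ∫ x, g x * ψ x ∂μ ≤ B * ∫ x, |ψ x| ∂μ) {x : E} (hx : x ∈ V) :
    g x ≤ B := by
  by_contra! hlt
  obtain ⟨B', hB, hB'⟩ := exists_between hlt
  obtain ⟨ψ, ψ_nonneg, ψ_supp, ψ_pos⟩ := exists_testFunction_integral_pos (μ := μ) hx
    ((hg.continuousAt (V.isOpen.mem_nhds hx)).eventually (lt_mem_nhds hB'))
  have lower : B' * ∫ y, ψ y ∂μ ≤ ∫ y, g y * ψ y ∂μ := by
    rw [← integral_const_mul]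
    refine integral_mono ((integrable_testFunction ψ).const_mul B')
      (integrable_mul_testFunction hg ψ) fun y ↦ ?_
    by_cases hy : y ∈ tsupport ψ
    · exact mul_le_mul_of_nonneg_right (ψ_supp hy).le (ψ_nonneg y)
    · simp [image_eq_zero_of_notMem_tsupport hy]
  have upper : ∫ y, g y * ψ y ∂μ ≤ B * ∫ y, ψ y ∂μ := by
    simpa only [abs_of_nonneg (ψ_nonneg _)] using h ψ
  exact hB.not_ge (le_of_mul_le_mul_right (lower.trans upper) ψ_pos)

theorem abs_le_of_forall_abs_integral_mul_testFunction_le (hg : ContinuousOn g V)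
    (h : ∀ ψ : 𝓓(V, ℝ), |∫ x, g x * ψ x ∂μ| ≤ B * ∫ x, |ψ x| ∂μ) {x : E} (hx : x ∈ V) :
    |g x| ≤ B := by
  refine abs_le'.2 ⟨le_of_forall_integral_mul_testFunction_le (μ := μ) hg
    (fun ψ ↦ (le_abs_self _).trans (h ψ)) hx, ?_⟩
  refine le_of_forall_integral_mul_testFunction_le (μ := μ) (g := -g) hg.neg (fun ψ ↦ ?_) hx
  simpa only [Pi.neg_apply, neg_mul, integral_neg] using (neg_le_abs _).trans (h ψ)

end Duality

section Pairing

variable {E : Type*} [NormedAddCommGroup E] [NormedSpace ℝ E] [MeasurableSpace E] [BorelSpace E]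
  {V : Opens E} (p : ENNReal) [Fact (1 ≤ p)] (μ : Measure E) [IsFiniteMeasureOnCompacts μ]

/-- The continuous functional `u ↦ ∫ u ψ dμ` on `L^p(μ)` defined by a test function `ψ`. -/
def testPairing (ψ : 𝓓(V, ℝ)) : StrongDual ℝ (Lp ℝ p μ) :=
  have : Fact (1 ≤ p.conjExponent) := ⟨ENNReal.HolderConjugate.one_le p.conjExponent p⟩
  ((ContinuousLinearMap.mul ℝ ℝ).lpPairing μ p p.conjExponent).flip
    ((ψ.continuous.memLp_of_hasCompactSupport ψ.hasCompactSupport).toLp ψ)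

theorem testPairing_apply (ψ : 𝓓(V, ℝ)) (u : Lp ℝ p μ) :
    testPairing p μ ψ u = ∫ x, u x * ψ x ∂μ := by
  have : Fact (1 ≤ p.conjExponent) := ⟨ENNReal.HolderConjugate.one_le p.conjExponent p⟩
  have ψ_memLp := ψ.continuous.memLp_of_hasCompactSupport (μ := μ) (p := p.conjExponent)
    ψ.hasCompactSupport
  refine (ContinuousLinearMap.lpPairing_eq_integral _ u (ψ_memLp.toLp ψ)).trans ?_
  refine integral_congr_ae (ψ_memLp.coeFn_toLp.mono fun x hx ↦ ?_)
  exact congrArg (u x * ·) hx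

end Pairing

section PartialDerivatives

variable {n : ℕ} {V : Opens (Fin n → ℝ)}

theorem coe_lineDeriv_single (i : Fin n) (ψ : 𝓓(V, ℝ)) :
    ⇑(∂_{(Pi.single i 1 : Fin n → ℝ)} ψ : 𝓓(V, ℝ)) = pd i ψ := by
  ext x
  have ψ_differentiable : DifferentiableAt ℝ ψ x := ψ.contDiff.differentiable (by simp) x
  rw [TestFunction.lineDerivOp_eq_lineDerivCLM ℝ, TestFunction.lineDerivCLM_apply,
    ψ_differentiable.lineDeriv_eq_fderiv, if_pos (by simp), pd]

theorem contDiffOn_foldr_pd {s : Set (Fin n → ℝ)} (hs : IsOpen s) {k : ℕ∞ω} (l : List (Fin n))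
    {f : (Fin n → ℝ) → ℝ} (hf : ContDiffOn ℝ (k + l.length) f s) :
    ContDiffOn ℝ k (l.foldr pd f) s := by
  induction l generalizing k with
  | nil => simpa using hf
  | cons i l ih =>
    have contDiffOn_tail : ContDiffOn ℝ (k + 1) (l.foldr pd f) s :=
      ih (by simpa [add_assoc, add_comm (1 : ℕ∞ω)] using hf)
    exact (contDiffOn_tail.fderiv_of_isOpen hs le_rfl).clm_apply contDiffOn_const

theorem exists_testFunction_eq_foldr_pd (l : List (Fin n)) (φ : 𝓓(V, ℝ)) :
    ∃ ψ : 𝓓(V, ℝ), ⇑ψ = l.foldr pd φ := by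
  induction l with
  | nil => exact ⟨φ, rfl⟩
  | cons i l ih =>
    obtain ⟨ψ, hψ⟩ := ih
    exact ⟨∂_{(Pi.single i 1 : Fin n → ℝ)} ψ, by rw [coe_lineDeriv_single, hψ, List.foldr_cons]⟩

/-- The formal transpose `(-∂_{i_r}) ⋯ (-∂_{i_1})` of the iterated derivative `∂_{i_1} ⋯ ∂_{i_r}`
along the list `i_1, …, i_r`, acting on test functions. -/
def transposeDeriv (l : List (Fin n)) (ψ : 𝓓(V, ℝ)) : 𝓓(V, ℝ) :=
  l.foldl (fun φ i ↦ -∂_{(Pi.single i 1 : Fin n → ℝ)} φ) ψ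

theorem integral_mul_pd {f : (Fin n → ℝ) → ℝ} (hf : ContDiffOn ℝ 1 f V) (i : Fin n)
    (ψ : 𝓓(V, ℝ)) : ∫ x, f x * pd i ψ x = -∫ x, pd i f x * ψ x := by
  have pd_f_continuous : ContinuousOn (pd i f) V :=
    (contDiffOn_foldr_pd V.isOpen (k := 0) [i] (by simpa using hf)).continuousOn
  refine integral_mul_fderiv_eq_neg_fderiv_mul_of_integrable
    (integrable_mul_testFunction pd_f_continuous ψ) ?_
    (integrable_mul_testFunction hf.continuousOn ψ) (fun x hx ↦ ?_)
    fun x _ ↦ ψ.contDiff.differentiable (by simp) x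
  · have := integrable_mul_testFunction (μ := volume) hf.continuousOn
      (∂_{(Pi.single i 1 : Fin n → ℝ)} ψ)
    rwa [coe_lineDeriv_single] at this
  · exact (hf.contDiffAt (V.isOpen.mem_nhds (ψ.tsupport_subset hx))).differentiableAt one_ne_zero

theorem integral_mul_transposeDeriv (l : List (Fin n)) {f : (Fin n → ℝ) → ℝ}
    (hf : ContDiffOn ℝ l.length f V) (ψ : 𝓓(V, ℝ)) :
    ∫ x, f x * transposeDeriv l ψ x = ∫ x, l.foldr pd f x * ψ x := by
  induction l generalizing ψ with
  | nil => rfl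
  | cons i l ih =>
    have contDiffOn_tail : ContDiffOn ℝ 1 (l.foldr pd f) V :=
      contDiffOn_foldr_pd V.isOpen l (by simpa [add_comm] using hf)
    calc ∫ x, f x * transposeDeriv (i :: l) ψ x
        = ∫ x, l.foldr pd f x * (-∂_{(Pi.single i 1 : Fin n → ℝ)} ψ : 𝓓(V, ℝ)) x :=
          ih (hf.of_le (by simp)) _
      _ = -∫ x, l.foldr pd f x * pd i ψ x := by
          simp only [FunLike.coe_neg, Pi.neg_apply, coe_lineDeriv_single, mul_neg,
            integral_neg]
      _ = ∫ x, (i :: l).foldr pd f x * ψ x := by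
          rw [integral_mul_pd contDiffOn_tail, neg_neg, List.foldr_cons]

end PartialDerivatives

section DenjoyCarlemanBounds

variable {n : ℕ} {M : ℕ → ℝ} {C h : ℝ} {v : (Fin n → ℝ) → ℝ}

/-- The list of directions in which the multi-index derivative `mderiv α` differentiates. -/
def multiIndexList (α : Fin n → ℕ) : List (Fin n) :=
  (List.finRange n).flatMap fun i ↦ List.replicate (α i) i

theorem foldr_pd_multiIndexList (α : Fin n → ℕ) (f : (Fin n → ℝ) → ℝ) :
    (multiIndexList α).foldr pd f = mderiv α f :=
  rfl

/-- The Denjoy–Carleman bounds `|∂^α v| ≤ C h^|α| M_|α|` on `V` with explicit constants `C`, `h`. -/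
def DCBoundOn (M : ℕ → ℝ) (C h : ℝ) (V : Set (Fin n → ℝ)) (v : (Fin n → ℝ) → ℝ) : Prop :=
  ∀ α : Fin n → ℕ, ∀ x ∈ V, |mderiv α v x| ≤ C * h ^ degree α * M (degree α)

theorem DCBoundOn.mono {V : Set (Fin n → ℝ)} (hv : DCBoundOn M C h V v) (hM : ∀ k, 0 ≤ M k)
    (hh : 0 ≤ h) {C' h' : ℝ} (hC' : 0 ≤ C') (hCC' : C ≤ C') (hhh' : h ≤ h') :
    DCBoundOn M C' h' V v := fun α x hx ↦
  (hv α x hx).trans (mul_le_mul_of_nonneg_right (by gcongr) (hM _))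

variable {p : ENNReal} [Fact (1 ≤ p)] {U : Set (Fin n → ℝ)} {V : Opens (Fin n → ℝ)}

variable (p U) in
/-- The distributional derivative `∂^α u` tested against `ψ`, as a functional of `u ∈ L^p(U)`. -/
def derivPairing (α : Fin n → ℕ) (ψ : 𝓓(V, ℝ)) : StrongDual ℝ (Lp ℝ p (volume.restrict U)) :=
  testPairing p (volume.restrict U) (transposeDeriv (multiIndexList α) ψ)

theorem derivPairing_apply_eq_integral_mderiv (hVU : (V : Set (Fin n → ℝ)) ⊆ U)
    {u : Lp ℝ p (volume.restrict U)} (hv : ContDiffOn ℝ ∞ v V)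
    (huv : ∀ᵐ x, x ∈ V → u x = v x) (α : Fin n → ℕ) (ψ : 𝓓(V, ℝ)) :
    derivPairing p U α ψ u = ∫ x, mderiv α v x * ψ x := by
  rw [derivPairing, testPairing_apply, setIntegral_mul_testFunction_congr hVU huv,
    integral_mul_transposeDeriv _ (hv.of_le (by exact_mod_cast le_top)), foldr_pd_multiIndexList]

theorem dcBoundOn_iff_forall_abs_derivPairing_le (hVU : (V : Set (Fin n → ℝ)) ⊆ U)
    {u : Lp ℝ p (volume.restrict U)} (hv : ContDiffOn ℝ ∞ v V)
    (huv : ∀ᵐ x, x ∈ V → u x = v x) :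
    DCBoundOn M C h V v ↔ ∀ (α : Fin n → ℕ) (ψ : 𝓓(V, ℝ)),
      |derivPairing p U α ψ u| ≤ C * h ^ degree α * M (degree α) * ∫ x, |ψ x| := by
  simp only [derivPairing_apply_eq_integral_mderiv hVU hv huv]
  refine forall_congr' fun α ↦ ⟨abs_integral_mul_testFunction_le, fun hbound x hx ↦ ?_⟩
  have mderiv_continuous : ContinuousOn (mderiv α v) V :=
    (contDiffOn_foldr_pd V.isOpen (k := 0) (multiIndexList α)
      (hv.of_le (by exact_mod_cast le_top))).continuousOn
  exact abs_le_of_forall_abs_integral_mul_testFunction_le mderiv_continuous hbound hx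

theorem exists_forall_dcBoundOn_mul_norm (hM : ∀ k, 0 ≤ M k) (hVU : (V : Set (Fin n → ℝ)) ⊆ U)
    (H : Submodule ℝ (Lp ℝ p (volume.restrict U))) [CompleteSpace H]
    (hH : ∀ u ∈ H, ∃ v : (Fin n → ℝ) → ℝ, ContDiffOn ℝ ∞ v V ∧
      (∀ᵐ x, x ∈ V → u x = v x) ∧ ∃ C > 0, ∃ h > 0, DCBoundOn M C h V v) :
    ∃ C > 0, ∃ h ≥ 1, ∀ u ∈ H, ∀ v : (Fin n → ℝ) → ℝ, ContDiffOn ℝ ∞ v V →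
      (∀ᵐ x, x ∈ V → u x = v x) → DCBoundOn M (C * ‖u‖) h V v := by
  obtain ⟨N, C, hC, uniform_bound⟩ := exists_forall_norm_le_mul_of_forall_exists_norm_le (E := H)
    (fun i : (Fin n → ℕ) × 𝓓(V, ℝ) ↦ (derivPairing p U i.1 i.2).comp H.subtypeL)
    (fun (N : ℕ) i ↦ (N + 1) * (N + 1) ^ degree i.1 * M (degree i.1) * ∫ x, |i.2 x|) (by
      rintro ⟨u, hu⟩
      obtain ⟨v, hv, huv, C, -, h, hh, hbound⟩ := hH u hu
      obtain ⟨N, hN⟩ := exists_nat_ge (max C h)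
      have bound_N : DCBoundOn M (N + 1) (N + 1) V v :=
        hbound.mono hM hh.le (by positivity) (by grind) (by grind)
      exact ⟨N, fun i ↦ (dcBoundOn_iff_forall_abs_derivPairing_le hVU hv huv).1 bound_N i.1 i.2⟩)
  refine ⟨C * (N + 1), by positivity, N + 1, by simp, fun u hu v hv huv ↦ ?_⟩
  refine (dcBoundOn_iff_forall_abs_derivPairing_le hVU hv huv).2 fun α ψ ↦ ?_
  exact (uniform_bound (α, ψ) ⟨u, hu⟩).trans_eq (by simp only [Submodule.coe_norm]; ring)

end DenjoyCarlemanBounds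

section FiniteOrder

variable {n : ℕ} {M : ℕ → ℝ}

theorem card_midx_le (n k : ℕ) : #(midx n k) ≤ (2 ^ n) ^ k :=
  calc #(midx n k) ≤ (k + 1) ^ n := (card_filter_le _ _).trans_eq (by simp)
    _ ≤ (2 ^ k) ^ n := Nat.pow_le_pow_left Nat.lt_two_pow_self n
    _ = (2 ^ n) ^ k := by rw [← pow_mul, ← pow_mul, mul_comm]

theorem DCBoundOn.sqrt_sum_integral_sq_le {C h : ℝ} {V : Set (Fin n → ℝ)}
    {v : (Fin n → ℝ) → ℝ} (hv : DCBoundOn M C h V v) (hM : Monotone M) (hM0 : 0 ≤ M 0)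
    (hC : 0 ≤ C) (hh : 1 ≤ h) (hV : volume V ≠ ⊤) (k : ℕ) :
    √(∑ α ∈ midx n k, ∫ x in V, mderiv α v x ^ 2) ≤
      √(volume.real V) * C * (2 ^ n * h) ^ k * M k := by
  have M_nonneg (j : ℕ) : 0 ≤ M j := hM0.trans (hM j.zero_le)
  have integral_sq_le : ∀ α ∈ midx n k,
      ∫ x in V, mderiv α v x ^ 2 ≤ (C * h ^ k * M k) ^ 2 * volume.real V := fun α hα ↦ by
    refine (Real.le_norm_self _).trans
      (norm_setIntegral_le_of_norm_le_const hV.lt_top fun x hx ↦ ?_)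
    have degree_le : degree α ≤ k := (mem_filter.1 hα).2
    have abs_mderiv_le : |mderiv α v x| ≤ C * h ^ k * M k :=
      (hv α x hx).trans (mul_le_mul (by gcongr) (hM degree_le) (M_nonneg _) (by positivity))
    rw [norm_pow, Real.norm_eq_abs]
    gcongr
  refine Real.sqrt_le_iff.2 ⟨mul_nonneg (by positivity) (M_nonneg k), ?_⟩
  calc ∑ α ∈ midx n k, ∫ x in V, mderiv α v x ^ 2
      ≤ #(midx n k) * ((C * h ^ k * M k) ^ 2 * volume.real V) := by
        simpa using sum_le_card_nsmul _ _ _ integral_sq_le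
    _ ≤ ((2 ^ n) ^ k) ^ 2 * ((C * h ^ k * M k) ^ 2 * volume.real V) := by
        gcongr
        exact_mod_cast (card_midx_le n k).trans (Nat.le_self_pow two_ne_zero _)
    _ = (√(volume.real V) * C * (2 ^ n * h) ^ k * M k) ^ 2 := by
        simp only [mul_pow, Real.sq_sqrt measureReal_nonneg]
        ring

theorem norm_toLp_two_eq_sqrt {α : Type*} [MeasurableSpace α] {μ : Measure α} {f : α → ℝ}
    (hf : MemLp f 2 μ) : ‖hf.toLp f‖ = √(∫ x, f x ^ 2 ∂μ) := by
  rw [norm_eq_sqrt_real_inner, L2.inner_def]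
  congr 1
  refine integral_congr_ae (hf.coeFn_toLp.mono fun x hx ↦ ?_)
  simp only [hx, real_inner_self_eq_norm_sq, Real.norm_eq_abs, sq_abs]

end FiniteOrder

section WeakSolutions

variable {n m : ℕ} {a : (Fin n → ℕ) → (Fin n → ℝ) → ℝ}

theorem exists_testFunction_eq_transposeOp {U : Opens (Fin n → ℝ)}
    (ha : ∀ α ∈ midx n m, ContDiffOn ℝ ∞ (a α) U) (φ : 𝓓(U, ℝ)) :
    ∃ ψ : 𝓓(U, ℝ), ⇑ψ = transposeOp m a φ := by
  have exists_term : ∀ α ∈ midx n m, ∃ ψ : 𝓓(U, ℝ), ⇑ψ = mderiv α fun y ↦ a α y * φ y :=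
    fun α hα ↦ by
      obtain ⟨ψ, hψ⟩ := exists_testFunction_eq_mul (ha α hα) φ
      exact hψ ▸ exists_testFunction_eq_foldr_pd (multiIndexList α) ψ
  choose! ψ hψ using exists_term
  refine ⟨∑ α ∈ midx n m, (-1 : ℝ) ^ degree α • ψ α, funext fun x ↦ ?_⟩
  simp only [transposeOp, FunLike.coe_sum, Finset.sum_apply]
  exact sum_congr rfl fun α hα ↦ by rw [← hψ α hα]; rfl

theorem WeakKernel.congr_ae {U : Set (Fin n → ℝ)} {u v : (Fin n → ℝ) → ℝ}
    (hu : WeakKernel m a U u) (huv : u =ᵐ[volume.restrict U] v) : WeakKernel m a U v :=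
  fun φ hφ hφc hφU ↦ by
    rw [← hu φ hφ hφc hφU]
    exact integral_congr_ae (huv.mono fun x hx ↦ by simp only [hx])

variable (p : ENNReal) [Fact (1 ≤ p)]

variable (m a) in
/-- The weak solutions of `Pu = 0` in `L^p(U)`, written as an intersection of kernels of continuous
functionals; `ψ` runs over the transposes `P^t φ` that are test functions. -/
def weakKernelLp (U : Opens (Fin n → ℝ)) :
    Submodule ℝ (Lp ℝ p (volume.restrict (U : Set (Fin n → ℝ)))) :=
  ⨅ (φ : 𝓓(U, ℝ)) (ψ : 𝓓(U, ℝ)) (_ : ⇑ψ = transposeOp m a φ),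
    (testPairing p (volume.restrict U) ψ).ker

theorem isClosed_weakKernelLp (U : Opens (Fin n → ℝ)) :
    IsClosed (weakKernelLp m a p U : Set (Lp ℝ p (volume.restrict (U : Set (Fin n → ℝ))))) := by
  simp only [weakKernelLp, Submodule.coe_iInf]
  exact isClosed_iInter fun _ ↦ isClosed_iInter fun _ ↦ isClosed_iInter fun _ ↦
    ContinuousLinearMap.isClosed_ker _

variable {p}

theorem mem_weakKernelLp_iff {U : Opens (Fin n → ℝ)}
    (ha : ∀ α ∈ midx n m, ContDiffOn ℝ ∞ (a α) U)
    {u : Lp ℝ p (volume.restrict (U : Set (Fin n → ℝ)))} :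
    u ∈ weakKernelLp m a p U ↔ WeakKernel m a U u := by
  simp only [weakKernelLp, Submodule.mem_iInf, LinearMap.mem_ker, ContinuousLinearMap.coe_coe,
    testPairing_apply]
  refine ⟨fun hu φ hφ hφc hφU ↦ ?_, fun hu φ ψ hψ ↦ ?_⟩
  · obtain ⟨ψ, hψ⟩ := exists_testFunction_eq_transposeOp ha ⟨φ, hφ, hφc, hφU⟩
    exact hψ ▸ hu _ ψ hψ
  · exact hψ ▸ hu φ φ.contDiff φ.hasCompactSupport φ.tsupport_subset

end WeakSolutions

theorem IsWeightSeq.monotone {M : ℕ → ℝ} (hM : IsWeightSeq M) : Monotone M := by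
  obtain ⟨M_pos, M_zero, one_le_M_one, log_convex, -⟩ := hM
  refine monotone_nat_of_le_succ fun k ↦ ?_
  induction k with
  | zero => rwa [M_zero]
  | succ k ih =>
    refine le_of_mul_le_mul_left ?_ (M_pos (k + 1))
    calc M (k + 1) * M (k + 1) = M (k + 1) ^ 2 := (sq _).symm
      _ ≤ M k * M (k + 2) := log_convex k
      _ ≤ M (k + 1) * M (k + 2) := mul_le_mul_of_nonneg_right ih (M_pos _).le

theorem statement15_general {n : ℕ} {M : ℕ → ℝ} (hM : Monotone M) (hM0 : 0 ≤ M 0) {m : ℕ}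
    {a : (Fin n → ℕ) → (Fin n → ℝ) → ℝ} {V U : Set (Fin n → ℝ)} (hV : IsOpen V) (hU : IsOpen U)
    (hVU : V ⊆ U) (hVfin : volume V ≠ ⊤) (ha : ∀ α ∈ midx n m, ContDiffOn ℝ ∞ (a α) U)
    (hhypo : ∀ u : (Fin n → ℝ) → ℝ, MemLp u 2 (volume.restrict U) → WeakKernel m a U u →
      ∃ v : (Fin n → ℝ) → ℝ, ContDiffOn ℝ ∞ v V ∧ (∀ᵐ x, x ∈ V → u x = v x) ∧
        ∃ C > 0, ∃ h > 0, DCBoundOn M C h V v) :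
    ∃ C > 0, ∃ h > 0, ∀ k : ℕ, ∀ u : (Fin n → ℝ) → ℝ, MemLp u 2 (volume.restrict U) →
      WeakKernel m a U u → ∀ v : (Fin n → ℝ) → ℝ, ContDiffOn ℝ ∞ v V →
        (∀ᵐ x, x ∈ V → u x = v x) →
        (∑ α ∈ midx n k, ∫ x in V, mderiv α v x ^ 2) ^ ((1 : ℝ) / 2) ≤
          C * h ^ k * M k * (∫ x in U, u x ^ 2) ^ ((1 : ℝ) / 2) := by
  lift V to Opens (Fin n → ℝ) using hV
  lift U to Opens (Fin n → ℝ) using hU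
  set sqrtVol := √(volume.real (V : Set (Fin n → ℝ)))
  have M_nonneg (k : ℕ) : 0 ≤ M k := hM0.trans (hM k.zero_le)
  have := (isClosed_weakKernelLp (m := m) (a := a) 2 U).completeSpace_coe
  obtain ⟨C, hC, h, hh, dcBound⟩ := exists_forall_dcBoundOn_mul_norm M_nonneg hVU
    (weakKernelLp m a 2 U) fun u hu ↦ hhypo u (Lp.memLp u) ((mem_weakKernelLp_iff ha).1 hu)
  refine ⟨(sqrtVol + 1) * C, by positivity, 2 ^ n * h, by positivity,
    fun k u hu u_weak v hv huv ↦ ?_⟩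
  have u_ae : u =ᵐ[volume.restrict U] hu.toLp u := hu.coeFn_toLp.symm
  have rep_ae : ∀ᵐ x, x ∈ (V : Set (Fin n → ℝ)) → hu.toLp u x = v x := by
    filter_upwards [huv, (ae_restrict_iff' U.isOpen.measurableSet).1 u_ae] with x hx hx' hxV
    rw [← hx' (hVU hxV), hx hxV]
  have dcBound_v : DCBoundOn M (C * ‖hu.toLp u‖) h V v :=
    dcBound _ ((mem_weakKernelLp_iff ha).2 (u_weak.congr_ae u_ae)) v hv rep_ae
  have := M_nonneg k
  rw [← Real.sqrt_eq_rpow, ← Real.sqrt_eq_rpow, ← norm_toLp_two_eq_sqrt hu]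
  calc √(∑ α ∈ midx n k, ∫ x in V, mderiv α v x ^ 2)
      ≤ sqrtVol * (C * ‖hu.toLp u‖) * (2 ^ n * h) ^ k * M k :=
        dcBound_v.sqrt_sum_integral_sq_le hM hM0 (by positivity) hh hVfin k
    _ ≤ (sqrtVol + 1) * (C * ‖hu.toLp u‖) * (2 ^ n * h) ^ k * M k := by
        gcongr
        exact le_add_of_nonneg_right zero_le_one
    _ = (sqrtVol + 1) * C * (2 ^ n * h) ^ k * M k * ‖hu.toLp u‖ := by ring

end

/-- Proposition 2 of the paper: let `P = ∑_{|α|≤m} a_α ∂^α` have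
coefficients of class `E^{M}(Ω)`, `M` admissible, and suppose that on some open `U₀ ⊆ Ω`
every `L²` weak solution of `Pu = 0` is (a.e. on each `V ⋐ U ⊆ U₀`) a function with
`|∂^α ũ| ≤ C' h'^{|α|} M_{|α|}` on `V`.  Then for all `V ⋐ U ⊆ U₀` there are `C, h > 0`
such that for every `k`, every weak solution `u ∈ L²(U)` of `Pu = 0`, and its smooth
representative `ũ` on `V`,
`(∑_{|α|≤k} ‖∂^α ũ‖²_{L²(V)})^{1/2} ≤ C h^k M_k ‖u‖_{L²(U)}`. -/
theorem statement15 {n : ℕ} (M : ℕ → ℝ) (hM : IsAdmissible M)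
    (Ω : Set (Fin n → ℝ)) (hΩ : IsOpen Ω) (m : ℕ)
    (a : (Fin n → ℕ) → (Fin n → ℝ) → ℝ) (ha : ∀ α ∈ midx n m, a α ∈ DCclass M Ω)
    (U₀ : Set (Fin n → ℝ)) (hU₀o : IsOpen U₀) (hU₀Ω : U₀ ⊆ Ω)
    (hhypo : ∀ V U : Set (Fin n → ℝ), IsOpen V → IsOpen U → closure V ⊆ U →
      IsCompact (closure V) → U ⊆ U₀ →
      ∀ u : (Fin n → ℝ) → ℝ, MemLp u 2 (volume.restrict U) → WeakKernel m a U u →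
      ∃ v : (Fin n → ℝ) → ℝ, ContDiffOn ℝ (⊤ : ℕ∞) v V ∧
        (∀ᵐ x ∂volume, x ∈ V → u x = v x) ∧
        ∃ C' > 0, ∃ h' > 0, ∀ α : Fin n → ℕ, ∀ x ∈ V,
          |mderiv α v x| ≤ C' * h' ^ degree α * M (degree α)) :
    ∀ V U : Set (Fin n → ℝ), IsOpen V → IsOpen U → closure V ⊆ U →
      IsCompact (closure V) → U ⊆ U₀ →
      ∃ C > 0, ∃ h > 0, ∀ k : ℕ,
        ∀ u : (Fin n → ℝ) → ℝ, MemLp u 2 (volume.restrict U) → WeakKernel m a U u →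
        ∀ v : (Fin n → ℝ) → ℝ, ContDiffOn ℝ (⊤ : ℕ∞) v V →
          (∀ᵐ x ∂volume, x ∈ V → u x = v x) →
          (∑ α ∈ midx n k, ∫ x in V, (mderiv α v x) ^ 2) ^ ((1 : ℝ) / 2) ≤
            C * h ^ k * M k * (∫ x in U, (u x) ^ 2) ^ ((1 : ℝ) / 2) :=
  fun V U hV hU hVU hVc hUU₀ ↦ statement15_general hM.1.monotone (hM.1.1 0).le hV hU
    (subset_closure.trans hVU) ((measure_mono subset_closure).trans_lt hVc.measure_lt_top).ne
    (fun α hα ↦ (ha α hα).1.mono (hUU₀.trans hU₀Ω)) (hhypo V U hV hU hVU hVc hUU₀)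

end
end
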